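/- Let f be a trigonometric polynomial on 𝕋² whose Fourier support S is contained in the annulus {λ−δ < |k| < λ+δ} with λδ ≥ 1, and assume that every cap θ of dimensions δ × (λδ)^{1/2} covering the annulus satisfies #(S ∩ θ ∩ ℤ²) ≤ N. Then ‖f‖_{L⁴(𝕋²)} ≤ C N^{1/4} ‖f‖_{L²(𝕋²)}. -/

import Mathlib

open MeasureTheory

/-- The Euclidean norm on the plane `ℝ × ℝ`. -/
noncomputable def nrm2 (x : ℝ × ℝ) : ℝ := Real.sqrt (x.1 ^ 2 + x.2 ^ 2)

/-- The lattice point `k ∈ ℤ²` as a point of the plane. -/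
noncomputable def ptR (k : ℤ × ℤ) : ℝ × ℝ := ((k.1 : ℝ), (k.2 : ℝ))

/-- The angular coordinate of `x ∈ ℝ²`, normalized to lie in `[0, 2π)`. -/
noncomputable def ang (x : ℝ × ℝ) : ℝ := Complex.arg ((x.1 : ℂ) + (x.2 : ℂ) * Complex.I) + Real.pi

/-- The `j`-th cap: the intersection of the annulus `λ - δ < |x| < λ + δ` with the
angular sector of aperture `(δ/λ)^{1/2}`, so of dimensions roughly `δ × (λδ)^{1/2}`. -/
noncomputable def cap (lam δ : ℝ) (j : ℕ) : Set (ℝ × ℝ) :=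
  {x | (lam - δ < nrm2 x ∧ nrm2 x < lam + δ) ∧
    (j : ℝ) * Real.sqrt (δ / lam) ≤ ang x ∧ ang x < ((j : ℝ) + 1) * Real.sqrt (δ / lam)}

/-- The lattice points in the `j`-th cap. -/
noncomputable def capPts (lam δ : ℝ) (j : ℕ) : Set (ℤ × ℤ) := {k | ptR k ∈ cap lam δ j}

/-- The number of caps needed to cover the annulus. -/
noncomputable def numCaps (lam δ : ℝ) : ℕ := Nat.ceil (2 * Real.pi / Real.sqrt (δ / lam))

/-- The Euclidean distance between two lattice points. -/
noncomputable def distZ (P Q : ℤ × ℤ) : ℝ :=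
  Real.sqrt (((P.1 : ℝ) - Q.1) ^ 2 + ((P.2 : ℝ) - Q.2) ^ 2)

/-- The unit square. -/
noncomputable def unitSq : Set (ℝ × ℝ) := Set.Icc (0 : ℝ) 1 ×ˢ Set.Icc (0 : ℝ) 1

/-- `e(t) = exp(2πit)`. -/
noncomputable def e₂ (t : ℝ) : ℂ := Complex.exp (2 * Real.pi * Complex.I * t)


lemma aux_intervalIntegral (m : ℤ) : ∫ t in Set.Icc (0 : ℝ) 1, e₂ ((m : ℝ) * t) = if m = 0 then 1 else 0 := by
  rw [integral_Icc_eq_integral_Ioc, ← intervalIntegral.integral_of_le zero_le_one]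
  by_cases h : m = 0
  · simp [h, e₂]
  · rw [if_neg h]
    have hc : (2 * Real.pi * Complex.I * m : ℂ) ≠ 0 := by
      simp [h, Real.pi_ne_zero]
    have : ∀ t : ℝ, e₂ ((m : ℝ) * t) = Complex.exp ((2 * Real.pi * Complex.I * m) * t) := by
      intro t
      unfold e₂
      congr 1
      push_cast
      ring
    simp_rw [this]
    rw [integral_exp_mul_complex hc]
    have h1 : Complex.exp ((2 * Real.pi * Complex.I * m) * (1 : ℝ)) = 1 := by
      rw [Complex.exp_eq_one_iff]
      exact ⟨m, by push_cast; ring⟩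
    rw [h1]
    simp

lemma aux_e_add (s t : ℝ) : e₂ (s + t) = e₂ s * e₂ t := by
  unfold e₂
  rw [← Complex.exp_add]
  congr 1
  push_cast
  ring

lemma aux_e_conj (s : ℝ) : (starRingEnd ℂ) (e₂ s) = e₂ (-s) := by
  unfold e₂
  rw [← Complex.exp_conj]
  congr 1
  have h2 : (starRingEnd ℂ) 2 = 2 := Complex.conj_ofNat 2
  simp [h2]

lemma aux_e_cont : Continuous e₂ := by
  unfold e₂
  fun_prop

lemma aux_orth (m : ℤ × ℤ) :
    ∫ x in unitSq, e₂ ((m.1 : ℝ) * x.1 + (m.2 : ℝ) * x.2) = if m = 0 then 1 else 0 := by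
  simp_rw [aux_e_add]
  unfold unitSq
  rw [Measure.volume_eq_prod,
    setIntegral_prod_mul (fun t : ℝ => e₂ ((m.1 : ℝ) * t)) (fun t : ℝ => e₂ ((m.2 : ℝ) * t)),
    aux_intervalIntegral, aux_intervalIntegral]
  by_cases h1 : m.1 = 0 <;> by_cases h2 : m.2 = 0 <;> simp [h1, h2, Prod.ext_iff]

lemma aux_integrable {E : Type*} [NormedAddCommGroup E] (g : ℝ × ℝ → E) (hg : Continuous g) :
    IntegrableOn g unitSq := by
  apply hg.continuousOn.integrableOn_compact
  exact isCompact_Icc.prod isCompact_Icc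

noncomputable def auxF (T : Finset (ℤ × ℤ)) (c : ℤ × ℤ → ℂ) (x : ℝ × ℝ) : ℂ :=
  ∑ k ∈ T, c k * e₂ ((k.1 : ℝ) * x.1 + (k.2 : ℝ) * x.2)

lemma auxF_cont (T : Finset (ℤ × ℤ)) (c : ℤ × ℤ → ℂ) : Continuous (auxF T c) := by
  unfold auxF
  have := aux_e_cont
  fun_prop

lemma aux_parseval (T : Finset (ℤ × ℤ)) (c : ℤ × ℤ → ℂ) :
    ∫ x in unitSq, ‖auxF T c x‖ ^ 2 = ∑ k ∈ T, ‖c k‖ ^ 2 := by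
  have key : ∫ x in unitSq, ((‖auxF T c x‖ ^ 2 : ℝ) : ℂ) = ∑ k ∈ T, ((‖c k‖ ^ 2 : ℝ) : ℂ) := by
    have h1 : ∀ x : ℝ × ℝ, ((‖auxF T c x‖ ^ 2 : ℝ) : ℂ) = ∑ k ∈ T, ∑ l ∈ T,
        (c k * (starRingEnd ℂ) (c l)) *
          e₂ (((k - l).1 : ℝ) * x.1 + ((k - l).2 : ℝ) * x.2) := by
      intro x
      push_cast
      rw [← Complex.mul_conj']
      unfold auxF
      rw [map_sum, Finset.sum_mul_sum]
      refine Finset.sum_congr rfl fun k _ => Finset.sum_congr rfl fun l _ => ?_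
      rw [map_mul, aux_e_conj]
      have : ((k.1 - l.1 : ℤ) : ℝ) * x.1 + ((k.2 - l.2 : ℤ) : ℝ) * x.2
        = ((k.1 : ℝ) * x.1 + (k.2 : ℝ) * x.2) + -((l.1 : ℝ) * x.1 + (l.2 : ℝ) * x.2) := by
        push_cast; ring
      rw [Prod.fst_sub, Prod.snd_sub, this, aux_e_add (_ + _) (-_)]
      generalize e₂ (_ + _) = X
      generalize e₂ (-_) = Y
      ring
    have hIntegr : ∀ k l : ℤ × ℤ, IntegrableOn (fun x : ℝ × ℝ => (c k * (starRingEnd ℂ) (c l)) *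
          e₂ (((k - l).1 : ℝ) * x.1 + ((k - l).2 : ℝ) * x.2)) unitSq := by
      intro k l
      apply aux_integrable
      have := aux_e_cont
      fun_prop
    simp_rw [h1]
    rw [integral_finsetSum _ (fun k _ => integrable_finsetSum _ (fun l _ => hIntegr k l))]
    refine Finset.sum_congr rfl fun k hk => ?_
    rw [integral_finsetSum _ (fun l _ => hIntegr k l)]
    simp_rw [integral_const_mul, aux_orth]
    simp only [sub_eq_zero, mul_ite, mul_one, mul_zero]
    rw [Finset.sum_ite_eq, if_pos hk, Complex.mul_conj']
    push_cast
    rfl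
  rw [integral_complex_ofReal] at key
  exact_mod_cast key

lemma aux_l4 (T : Finset (ℤ × ℤ)) (a : ℤ × ℤ → ℂ) (M : ℕ)
    (h : ∀ n : ℤ × ℤ, (T.filter (fun k => n - k ∈ T)).card ≤ M) :
    ∫ x in unitSq, ‖auxF T a x‖ ^ 4 ≤ M * (∑ k ∈ T, ‖a k‖ ^ 2) ^ 2 := by
  classical
  set R : Finset (ℤ × ℤ) := (T ×ˢ T).image (fun p => p.1 + p.2) with hR
  set r : ℤ × ℤ → ℂ := fun n => ∑ p ∈ (T ×ˢ T).filter (fun p => p.1 + p.2 = n), a p.1 * a p.2 with hr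
  have h1 : ∀ x, auxF T a x ^ 2 = auxF R r x := by
    intro x
    unfold auxF
    rw [sq, Finset.sum_mul_sum, ← Finset.sum_product',
      ← Finset.sum_fiberwise_of_maps_to (s := T ×ˢ T) (t := R) (g := fun p => p.1 + p.2)
        (fun p hp => Finset.mem_image_of_mem _ hp)]
    refine Finset.sum_congr rfl fun n _ => ?_
    rw [hr, Finset.sum_mul]
    refine Finset.sum_congr rfl fun p hp => ?_
    have hp2 := (Finset.mem_filter.1 hp).2
    rw [← hp2]
    have : ((p.1 + p.2).1 : ℝ) * x.1 + ((p.1 + p.2).2 : ℝ) * x.2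
      = ((p.1.1 : ℝ) * x.1 + (p.1.2 : ℝ) * x.2) + ((p.2.1 : ℝ) * x.1 + (p.2.2 : ℝ) * x.2) := by
      rw [Prod.fst_add, Prod.snd_add]; push_cast; ring
    rw [this, aux_e_add (_ + _) (_ + _)]
    generalize e₂ (_ + _) = X
    generalize e₂ (_ + _) = Y
    ring
  have h2 : ∀ x, ‖auxF T a x‖ ^ 4 = ‖auxF R r x‖ ^ 2 := by
    intro x
    rw [← h1, norm_pow]
    ring
  simp_rw [h2]
  rw [aux_parseval]
  have h3 : ∀ n ∈ R, ‖r n‖ ^ 2 ≤ M * ∑ p ∈ (T ×ˢ T).filter (fun p => p.1 + p.2 = n),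
      ‖a p.1‖ ^ 2 * ‖a p.2‖ ^ 2 := by
    intro n _
    have hcard : (((T ×ˢ T).filter (fun p => p.1 + p.2 = n)).card : ℝ) ≤ M := by
      have : ((T ×ˢ T).filter (fun p => p.1 + p.2 = n)).card ≤ (T.filter (fun k => n - k ∈ T)).card := by
        apply Finset.card_le_card_of_injOn (fun p => p.1)
        · intro p hp
          simp only [Finset.coe_filter, Finset.mem_product, Set.mem_ofPred_eq] at hp ⊢
          refine ⟨hp.1.1, ?_⟩
          rw [← hp.2]
          simpa using hp.1.2
        · intro p hp q hq hpq
          simp only [Finset.coe_filter, Finset.mem_product, Set.mem_ofPred_eq] at hp hq hpq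
          have h5 := hp.2.trans hq.2.symm
          rw [hpq] at h5
          exact Prod.ext hpq (add_left_cancel h5)
      exact_mod_cast this.trans (h n)
    calc ‖r n‖ ^ 2 ≤ (∑ p ∈ (T ×ˢ T).filter (fun p => p.1 + p.2 = n), ‖a p.1 * a p.2‖) ^ 2 := by
          gcongr
          exact norm_sum_le _ _
      _ ≤ _ := sq_sum_le_card_mul_sum_sq
      _ ≤ M * ∑ p ∈ (T ×ˢ T).filter (fun p => p.1 + p.2 = n), ‖a p.1 * a p.2‖ ^ 2 := by
          gcongr
      _ = _ := by simp_rw [norm_mul, mul_pow]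
  refine (Finset.sum_le_sum h3).trans ?_
  rw [← Finset.mul_sum, Finset.sum_fiberwise_of_maps_to (s := T ×ˢ T) (t := R)
    (g := fun p => p.1 + p.2) (fun p hp => Finset.mem_image_of_mem _ hp), sq, Finset.sum_mul_sum,
    Finset.sum_product]

/-- Pure plane geometry. -/
lemma aux_geom (L k1 k2 l1 l2 p1 p2 q1 q2 lam δ : ℝ) (hlam : 0 < lam) (hδ : 0 < δ)
    (hd : δ ≤ lam / 2) (hL : L = lam * δ)
    (h1 : k1 + l1 = p1 + q1) (h2 : k2 + l2 = p2 + q2)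
    (hk : |k1 ^ 2 + k2 ^ 2 - lam ^ 2| ≤ 3 * L) (hl : |l1 ^ 2 + l2 ^ 2 - lam ^ 2| ≤ 3 * L)
    (hp : |p1 ^ 2 + p2 ^ 2 - lam ^ 2| ≤ 3 * L) (hq : |q1 ^ 2 + q2 ^ 2 - lam ^ 2| ≤ 3 * L)
    (hn : lam ^ 2 / 2 ≤ (k1 + l1) ^ 2 + (k2 + l2) ^ 2) :
    (k1 - p1) ^ 2 + (k2 - p2) ^ 2 ≤ 81 * L ∨ (k1 - q1) ^ 2 + (k2 - q2) ^ 2 ≤ 81 * L := by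
  obtain ⟨n1, hn1⟩ : ∃ n1, n1 = k1 + l1 := ⟨_, rfl⟩
  obtain ⟨n2, hn2⟩ : ∃ n2, n2 = k2 + l2 := ⟨_, rfl⟩
  obtain ⟨v1, hv1⟩ : ∃ v1, v1 = k1 - p1 := ⟨_, rfl⟩
  obtain ⟨v2, hv2⟩ : ∃ v2, v2 = k2 - p2 := ⟨_, rfl⟩
  obtain ⟨w1, hw1⟩ : ∃ w1, w1 = k1 - q1 := ⟨_, rfl⟩
  obtain ⟨w2, hw2⟩ : ∃ w2, w2 = k2 - q2 := ⟨_, rfl⟩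
  have hl1 : l1 = n1 - k1 := by linarith
  have hl2 : l2 = n2 - k2 := by linarith
  have hq1 : q1 = n1 - p1 := by linarith
  have hq2 : q2 = n2 - p2 := by linarith
  rw [abs_le] at hk hl hp hq
  have e1 : v1 * n1 + v2 * n2 = ((k1 ^ 2 + k2 ^ 2) - (l1 ^ 2 + l2 ^ 2) - (p1 ^ 2 + p2 ^ 2)
      + (q1 ^ 2 + q2 ^ 2)) / 2 := by
    subst hv1 hv2; rw [hl1, hl2, hq1, hq2]; ring
  have e2 : w1 * n1 + w2 * n2 = ((k1 ^ 2 + k2 ^ 2) - (l1 ^ 2 + l2 ^ 2) - (q1 ^ 2 + q2 ^ 2)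
      + (p1 ^ 2 + p2 ^ 2)) / 2 := by
    subst hw1 hw2; rw [hl1, hl2, hq1, hq2]; ring
  have e3 : v1 * w1 + v2 * w2 = ((k1 ^ 2 + k2 ^ 2) + (l1 ^ 2 + l2 ^ 2) - (q1 ^ 2 + q2 ^ 2)
      - (p1 ^ 2 + p2 ^ 2)) / 2 := by
    subst hw1 hw2 hv1 hv2; rw [hl1, hl2, hq1, hq2]; ring
  have b1 : |v1 * n1 + v2 * n2| ≤ 6 * L := by rw [abs_le]; constructor <;> linarith
  have b2 : |w1 * n1 + w2 * n2| ≤ 6 * L := by rw [abs_le]; constructor <;> linarith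
  have b3 : |v1 * w1 + v2 * w2| ≤ 6 * L := by rw [abs_le]; constructor <;> linarith
  have hLpos : 0 < L := by rw [hL]; positivity
  rw [← hn1, ← hn2] at hn
  rw [← hv1, ← hv2, ← hw1, ← hw2]
  obtain ⟨Q, hQ⟩ : ∃ Q, Q = n1 ^ 2 + n2 ^ 2 := ⟨_, rfl⟩
  rw [← hQ] at hn
  have hQpos : 0 < Q := lt_of_lt_of_le (by positivity) hn
  have hLL : L ^ 2 ≤ L * Q := by
    have h8 : lam * δ ≤ lam * (lam / 2) := mul_le_mul_of_nonneg_left hd hlam.le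
    have h9 : L ≤ Q := by rw [hL]; linarith
    rw [sq]
    exact mul_le_mul_of_nonneg_left h9 hLpos.le
  obtain ⟨A, hA⟩ : ∃ A, A = v1 * n2 - v2 * n1 := ⟨_, rfl⟩
  obtain ⟨B, hB⟩ : ∃ B, B = w1 * n2 - w2 * n1 := ⟨_, rfl⟩
  have sq1 : (v1 * n1 + v2 * n2) ^ 2 ≤ 36 * L ^ 2 := by
    have := sq_le_sq' (abs_le.1 b1).1 (abs_le.1 b1).2
    linarith
  have sq2 : (w1 * n1 + w2 * n2) ^ 2 ≤ 36 * L ^ 2 := by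
    have := sq_le_sq' (abs_le.1 b2).1 (abs_le.1 b2).2
    linarith
  have hLL2 : L ^ 2 ≤ L * Q := hLL
  have hAB : |A * B| ≤ 6 * L * Q + 36 * L ^ 2 := by
    have : A * B = (v1 * w1 + v2 * w2) * Q - (v1 * n1 + v2 * n2) * (w1 * n1 + w2 * n2) := by
      rw [hA, hB, hQ]; ring
    rw [this]
    refine (abs_sub _ _).trans ?_
    rw [abs_mul, abs_mul, abs_of_pos hQpos]
    have i1 : |v1 * w1 + v2 * w2| * Q ≤ 6 * L * Q := by gcongr
    have i2 : |v1 * n1 + v2 * n2| * |w1 * n1 + w2 * n2| ≤ (6 * L) * (6 * L) := by gcongr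
    linarith
  have hv : (v1 ^ 2 + v2 ^ 2) * Q = (v1 * n1 + v2 * n2) ^ 2 + A ^ 2 := by rw [hQ, hA]; ring
  have hw : (w1 ^ 2 + w2 ^ 2) * Q = (w1 * n1 + w2 * n2) ^ 2 + B ^ 2 := by rw [hQ, hB]; ring
  rcases le_total |A| |B| with hle | hle
  · left
    have : A ^ 2 ≤ |A * B| := by
      rw [abs_mul, ← sq_abs, sq]; gcongr
    have : (v1 ^ 2 + v2 ^ 2) * Q ≤ (81 * L) * Q := by rw [hv]; linarith [mul_pos hLpos hQpos]
    exact le_of_mul_le_mul_right this hQpos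
  · right
    have : B ^ 2 ≤ |A * B| := by
      rw [abs_mul, ← sq_abs B, sq]; gcongr
    have : (w1 ^ 2 + w2 ^ 2) * Q ≤ (81 * L) * Q := by rw [hw]; linarith [mul_pos hLpos hQpos]
    exact le_of_mul_le_mul_right this hQpos

lemma aux_polar (k : ℤ × ℤ) : (k.1 : ℝ) = - nrm2 (ptR k) * Real.cos (ang (ptR k)) ∧
    (k.2 : ℝ) = - nrm2 (ptR k) * Real.sin (ang (ptR k)) := by
  have hn : nrm2 (ptR k) = ‖(((k.1 : ℝ) : ℂ) + ((k.2 : ℝ) : ℂ) * Complex.I)‖ := by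
    rw [Complex.norm_add_mul_I]; rfl
  have h1 := Complex.norm_mul_cos_arg (((k.1 : ℝ) : ℂ) + ((k.2 : ℝ) : ℂ) * Complex.I)
  have h2 := Complex.norm_mul_sin_arg (((k.1 : ℝ) : ℂ) + ((k.2 : ℝ) : ℂ) * Complex.I)
  rw [← hn] at h1 h2
  unfold ang
  rw [Real.cos_add_pi, Real.sin_add_pi]
  constructor
  · simp only [ptR] at h1 ⊢
    simp only [Complex.add_re, Complex.ofReal_re, Complex.mul_re, Complex.I_re, Complex.I_im,
      Complex.ofReal_im] at h1
    linarith
  · simp only [ptR] at h2 ⊢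
    simp only [Complex.add_im, Complex.ofReal_re, Complex.mul_im, Complex.I_re, Complex.I_im,
      Complex.ofReal_im] at h2
    linarith

lemma aux_nrm_sq (k : ℤ × ℤ) : nrm2 (ptR k) ^ 2 = (k.1 : ℝ) ^ 2 + (k.2 : ℝ) ^ 2 := by
  unfold nrm2 ptR
  rw [Real.sq_sqrt (by positivity)]

lemma aux_ang_pos (x : ℝ × ℝ) : 0 ≤ ang x := by
  unfold ang
  linarith [Complex.neg_pi_lt_arg ((x.1 : ℂ) + (x.2 : ℂ) * Complex.I)]

lemma aux_ang_le (x : ℝ × ℝ) : ang x ≤ 2 * Real.pi := by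
  unfold ang
  linarith [Complex.arg_le_pi ((x.1 : ℂ) + (x.2 : ℂ) * Complex.I)]

lemma aux_dot (k l : ℤ × ℤ) (h : |ang (ptR k) - ang (ptR l)| ≤ Real.pi / 2) :
    0 ≤ (k.1 : ℝ) * l.1 + (k.2 : ℝ) * l.2 := by
  obtain ⟨h1, h2⟩ := aux_polar k
  obtain ⟨h3, h4⟩ := aux_polar l
  have hc : 0 ≤ Real.cos (ang (ptR k) - ang (ptR l)) :=
    Real.cos_nonneg_of_mem_Icc ⟨by linarith [(abs_le.1 h).1], (abs_le.1 h).2⟩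
  have : (k.1 : ℝ) * l.1 + (k.2 : ℝ) * l.2 =
      nrm2 (ptR k) * nrm2 (ptR l) * Real.cos (ang (ptR k) - ang (ptR l)) := by
    rw [Real.cos_sub]
    rw [h1, h2, h3, h4]; ring
  rw [this]
  have n1 : 0 ≤ nrm2 (ptR k) := Real.sqrt_nonneg _
  have n2 : 0 ≤ nrm2 (ptR l) := Real.sqrt_nonneg _
  positivity

lemma aux_abs_sin (x : ℝ) (h : |x| ≤ Real.pi / 2) : 2 / Real.pi * |x| ≤ |Real.sin x| := by
  have := Real.mul_le_sin (abs_nonneg x) h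
  refine this.trans ?_
  rcases abs_cases x with ⟨h1, _⟩ | ⟨h1, _⟩ <;> rw [h1]
  · exact le_abs_self _
  · rw [Real.sin_neg]; exact neg_le_abs _

/-- Nearby points in a common sector have nearby angles. -/
lemma aux_ang_close (lam δ : ℝ) (hlam : 0 < lam) (hδ : 0 < δ) (k l : ℤ × ℤ)
    (h : |ang (ptR k) - ang (ptR l)| ≤ Real.pi / 2)
    (hk : lam / 2 ≤ nrm2 (ptR k)) (hl : lam / 2 ≤ nrm2 (ptR l))
    (hd : ((k.1 : ℝ) - l.1) ^ 2 + ((k.2 : ℝ) - l.2) ^ 2 ≤ 81 * (lam * δ)) :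
    |ang (ptR k) - ang (ptR l)| ≤ 29 * Real.sqrt (δ / lam) := by
  have hs := aux_abs_sin _ h
  obtain ⟨h1, h2⟩ := aux_polar k
  obtain ⟨h3, h4⟩ := aux_polar l
  set α := ang (ptR k)
  set β := ang (ptR l)
  set x := nrm2 (ptR k) with hx
  set y := nrm2 (ptR l) with hy
  have hx2 : x ^ 2 = (k.1 : ℝ) ^ 2 + (k.2 : ℝ) ^ 2 := aux_nrm_sq k
  have hcross : x * y * Real.sin (α - β) = (k.2 : ℝ) * l.1 - (k.1 : ℝ) * l.2 := by
    rw [Real.sin_sub, h1, h2, h3, h4]; ring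
  have hxpos : 0 < x := by linarith
  have hle : (x * y * Real.sin (α - β)) ^ 2 ≤ x ^ 2 * (81 * (lam * δ)) := by
    rw [hcross]
    have : ((k.2 : ℝ) * l.1 - (k.1 : ℝ) * l.2) ^ 2 ≤
        x ^ 2 * (((k.1 : ℝ) - l.1) ^ 2 + ((k.2 : ℝ) - l.2) ^ 2) := by
      rw [hx2]
      nlinarith [sq_nonneg ((k.1 : ℝ) * (k.1 - l.1) + (k.2 : ℝ) * (k.2 - l.2))]
    refine this.trans ?_
    gcongr
  have hle2 : (y * Real.sin (α - β)) ^ 2 ≤ 81 * (lam * δ) := by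
    have : x ^ 2 * (y * Real.sin (α - β)) ^ 2 ≤ x ^ 2 * (81 * (lam * δ)) := by
      refine le_trans (le_of_eq ?_) hle; ring
    exact le_of_mul_le_mul_left this (by positivity)
  have hle3 : (lam / 2) ^ 2 * Real.sin (α - β) ^ 2 ≤ 81 * (lam * δ) := by
    refine le_trans ?_ hle2
    rw [mul_pow]
    gcongr
  have hle4 : Real.sin (α - β) ^ 2 ≤ 18 ^ 2 * (δ / lam) := by
    have e : 18 ^ 2 * (δ / lam) = (81 * (lam * δ)) / (lam / 2) ^ 2 := by
      field_simp; norm_num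
    rw [e, le_div_iff₀ (by positivity)]
    linarith
  have hle5 : |Real.sin (α - β)| ≤ 18 * Real.sqrt (δ / lam) := by
    apply abs_le_of_sq_le_sq' _ (by positivity) |> abs_le.2
    rw [mul_pow, Real.sq_sqrt (by positivity)]
    exact hle4
  have h6 : 2 / Real.pi * |α - β| ≤ 18 * Real.sqrt (δ / lam) := hs.trans hle5
  have h7 : |α - β| ≤ (Real.pi / 2) * (18 * Real.sqrt (δ / lam)) := by
    have : |α - β| = (Real.pi / 2) * (2 / Real.pi * |α - β|) := by
      field_simp
    rw [this]
    gcongr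
  refine h7.trans ?_
  have : Real.pi * 9 ≤ 29 := by linarith [Real.pi_lt_d2]
  nlinarith [Real.sqrt_nonneg (δ / lam)]

/-- Counting through caps. -/
lemma aux_count (lam δ : ℝ) (hlam : 0 < lam) (hδ : 0 < δ) (N : ℕ) (S T : Finset (ℤ × ℤ))
    (hS : ∀ k ∈ S, lam - δ < nrm2 (ptR k) ∧ nrm2 (ptR k) < lam + δ)
    (hN : ∀ j : ℕ, {k : ℤ × ℤ | k ∈ S ∧ k ∈ capPts lam δ j}.ncard ≤ N)
    (hT : T ⊆ S) (J : Finset ℕ)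
    (hJ : ∀ k ∈ T, ⌊ang (ptR k) / Real.sqrt (δ / lam)⌋₊ ∈ J) : T.card ≤ N * J.card := by
  classical
  have hs : 0 < Real.sqrt (δ / lam) := Real.sqrt_pos.2 (by positivity)
  refine Finset.card_le_mul_card_image_of_maps_to hJ N ?_
  intro j _
  refine le_trans ?_ (hN j)
  rw [← Set.ncard_coe_finset]
  apply Set.ncard_le_ncard
  · intro k hk
    simp only [Finset.coe_filter, Set.mem_ofPred_eq] at hk
    have hkS := hT hk.1
    refine ⟨hkS, hS k hkS, ?_, ?_⟩
    · rw [← le_div_iff₀ hs, ← hk.2]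
      exact Nat.floor_le (div_nonneg (aux_ang_pos _) hs.le)
    · rw [← div_lt_iff₀ hs, ← hk.2]
      exact Nat.lt_floor_add_one _
  · exact S.finite_toSet.subset fun k hk => hk.1

lemma aux_count_near (lam δ : ℝ) (hlam : 0 < lam) (hδ : 0 < δ) (N : ℕ) (S T : Finset (ℤ × ℤ))
    (hS : ∀ k ∈ S, lam - δ < nrm2 (ptR k) ∧ nrm2 (ptR k) < lam + δ)
    (hN : ∀ j : ℕ, {k : ℤ × ℤ | k ∈ S ∧ k ∈ capPts lam δ j}.ncard ≤ N)
    (hT : T ⊆ S) (c : ℤ × ℤ)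
    (hc : ∀ k ∈ T, |ang (ptR k) - ang (ptR c)| ≤ 29 * Real.sqrt (δ / lam)) :
    T.card ≤ N * 61 := by
  have hs : 0 < Real.sqrt (δ / lam) := Real.sqrt_pos.2 (by positivity)
  set s := Real.sqrt (δ / lam)
  set m := ⌊ang (ptR c) / s⌋₊ with hm
  refine (aux_count lam δ hlam hδ N S T hS hN hT (Finset.Icc (m - 30) (m + 30)) ?_).trans ?_
  · intro k hk
    have h1 := abs_le.1 (hc k hk)
    have h2 : ang (ptR k) / s ≤ ang (ptR c) / s + 29 := by
      rw [div_add' _ _ _ hs.ne', div_le_div_iff_of_pos_right hs]; linarith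
    have h3 : ang (ptR c) / s ≤ ang (ptR k) / s + 29 := by
      rw [div_add' _ _ _ hs.ne', div_le_div_iff_of_pos_right hs]; linarith
    have f1 := Nat.floor_le (div_nonneg (aux_ang_pos (ptR k)) hs.le)
    have f2 := Nat.floor_le (div_nonneg (aux_ang_pos (ptR c)) hs.le)
    have f3 := Nat.lt_floor_add_one (ang (ptR k) / s)
    have f4 := Nat.lt_floor_add_one (ang (ptR c) / s)
    rw [← hm] at f2 f4
    rw [Finset.mem_Icc]
    change m - 30 ≤ ⌊ang (ptR k) / s⌋₊ ∧ ⌊ang (ptR k) / s⌋₊ ≤ m + 30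
    have g1 : m < ⌊ang (ptR k) / s⌋₊ + 30 := by
      have : (m : ℝ) < (⌊ang (ptR k) / s⌋₊ : ℝ) + 30 := by linarith
      exact_mod_cast this
    have g2 : ⌊ang (ptR k) / s⌋₊ < m + 30 := by
      have : (⌊ang (ptR k) / s⌋₊ : ℝ) < (m : ℝ) + 30 := by linarith
      exact_mod_cast this
    omega
  · apply Nat.mul_le_mul_left
    rw [Nat.card_Icc]
    omega

lemma aux_rep (lam δ : ℝ) (hlam : 0 < lam) (hδ : 0 < δ) (N : ℕ) (S T : Finset (ℤ × ℤ))
    (hS : ∀ k ∈ S, lam - δ < nrm2 (ptR k) ∧ nrm2 (ptR k) < lam + δ)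
    (hN : ∀ j : ℕ, {k : ℤ × ℤ | k ∈ S ∧ k ∈ capPts lam δ j}.ncard ≤ N)
    (hT : T ⊆ S)
    (hsec : ∀ k ∈ T, ∀ l ∈ T, |ang (ptR k) - ang (ptR l)| ≤ Real.pi / 2) (n : ℤ × ℤ) :
    (T.filter (fun k => n - k ∈ T)).card ≤ 122 * N := by
  classical
  set U := T.filter (fun k => n - k ∈ T) with hU
  have hUT : U ⊆ T := Finset.filter_subset _ _
  have hUS : U ⊆ S := hUT.trans hT
  rcases U.eq_empty_or_nonempty with h0 | ⟨p, hp⟩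
  · simp [h0]
  have hpT := hUT hp
  by_cases hd : δ ≤ lam / 2
  · have hqT : n - p ∈ T := (Finset.mem_filter.1 hp).2
    set q := n - p with hq
    have hlow : ∀ k ∈ T, lam / 2 ≤ nrm2 (ptR k) := fun k hk => by
      linarith [(hS k (hT hk)).1]
    have hsq : ∀ k ∈ T, |(k.1 : ℝ) ^ 2 + (k.2 : ℝ) ^ 2 - lam ^ 2| ≤ 3 * (lam * δ) := by
      intro k hk
      rw [← aux_nrm_sq]
      obtain ⟨u1, u2⟩ := hS k (hT hk)
      have u3 := hlow k hk
      rw [abs_le]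
      constructor <;> nlinarith
    have hmain : ∀ k ∈ U, ((k.1 : ℝ) - p.1) ^ 2 + ((k.2 : ℝ) - p.2) ^ 2 ≤ 81 * (lam * δ) ∨
        ((k.1 : ℝ) - q.1) ^ 2 + ((k.2 : ℝ) - q.2) ^ 2 ≤ 81 * (lam * δ) := by
      intro k hk
      have hkT := hUT hk
      have hlT : n - k ∈ T := (Finset.mem_filter.1 hk).2
      refine aux_geom (lam * δ) k.1 k.2 ((n - k).1 : ℤ) ((n - k).2 : ℤ) p.1 p.2 q.1 q.2 lam δ hlam hδ hd rfl
        ?_ ?_ (hsq k hkT) (hsq _ hlT) (hsq p hpT) (hsq q hqT) ?_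
      · rw [hq, Prod.fst_sub, Prod.fst_sub]; push_cast; ring
      · rw [hq, Prod.snd_sub, Prod.snd_sub]; push_cast; ring
      · have d := aux_dot k (n - k) (hsec k hkT _ hlT)
        have s1 := aux_nrm_sq k
        have s2 := aux_nrm_sq (n - k)
        have b1 := hlow k hkT
        have b2 := hlow _ hlT
        have c1 : (lam / 2) ^ 2 ≤ nrm2 (ptR k) ^ 2 := by gcongr
        have c2 : (lam / 2) ^ 2 ≤ nrm2 (ptR (n - k)) ^ 2 := by gcongr
        nlinarith
    have hcov : U ⊆ U.filter (fun k => |ang (ptR k) - ang (ptR p)| ≤ 29 * Real.sqrt (δ / lam)) ∪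
        U.filter (fun k => |ang (ptR k) - ang (ptR q)| ≤ 29 * Real.sqrt (δ / lam)) := by
      intro k hk
      have hkT := hUT hk
      rw [Finset.mem_union]
      rcases hmain k hk with h | h
      · left
        exact Finset.mem_filter.2 ⟨hk, aux_ang_close lam δ hlam hδ k p (hsec k hkT p hpT) (hlow k hkT) (hlow p hpT) h⟩
      · right
        exact Finset.mem_filter.2 ⟨hk, aux_ang_close lam δ hlam hδ k q (hsec k hkT q hqT) (hlow k hkT) (hlow q hqT) h⟩
    have c1 := aux_count_near lam δ hlam hδ N S _ hS hN ((Finset.filter_subset _ _).trans hUS) p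
      (fun k hk => (Finset.mem_filter.1 hk).2 :
        ∀ k ∈ U.filter (fun k => |ang (ptR k) - ang (ptR p)| ≤ 29 * Real.sqrt (δ / lam)), _)
    have c2 := aux_count_near lam δ hlam hδ N S _ hS hN ((Finset.filter_subset _ _).trans hUS) q
      (fun k hk => (Finset.mem_filter.1 hk).2 :
        ∀ k ∈ U.filter (fun k => |ang (ptR k) - ang (ptR q)| ≤ 29 * Real.sqrt (δ / lam)), _)
    have c3 := (Finset.card_le_card hcov).trans (Finset.card_union_le _ _)
    omega
  · push Not at hd
    have hs : 1 / 2 ≤ Real.sqrt (δ / lam) := by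
      apply Real.le_sqrt_of_sq_le
      rw [le_div_iff₀ hlam]
      linarith
    have := aux_count_near lam δ hlam hδ N S U hS hN hUS p (fun k hk => by
      refine (hsec k (hUT hk) p hpT).trans ?_
      linarith [Real.pi_lt_d2])
    omega

lemma aux_pieces (z : ℕ → ℂ) : ‖∑ q ∈ Finset.range 5, z q‖ ^ 4 ≤ 125 * ∑ q ∈ Finset.range 5, ‖z q‖ ^ 4 := by
  have h1 : ‖∑ q ∈ Finset.range 5, z q‖ ≤ ∑ q ∈ Finset.range 5, ‖z q‖ := norm_sum_le _ _
  have h2 : (∑ q ∈ Finset.range 5, ‖z q‖) ^ 2 ≤ 5 * ∑ q ∈ Finset.range 5, ‖z q‖ ^ 2 := by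
    have := sq_sum_le_card_mul_sum_sq (s := Finset.range 5) (f := fun q => ‖z q‖)
    simpa using this
  have h3 : (∑ q ∈ Finset.range 5, ‖z q‖ ^ 2) ^ 2 ≤ 5 * ∑ q ∈ Finset.range 5, (‖z q‖ ^ 2) ^ 2 := by
    have := sq_sum_le_card_mul_sum_sq (s := Finset.range 5) (f := fun q => ‖z q‖ ^ 2)
    simpa using this
  calc ‖∑ q ∈ Finset.range 5, z q‖ ^ 4 ≤ (∑ q ∈ Finset.range 5, ‖z q‖) ^ 4 := by gcongr
    _ = ((∑ q ∈ Finset.range 5, ‖z q‖) ^ 2) ^ 2 := by ring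
    _ ≤ (5 * ∑ q ∈ Finset.range 5, ‖z q‖ ^ 2) ^ 2 := by gcongr
    _ = 25 * (∑ q ∈ Finset.range 5, ‖z q‖ ^ 2) ^ 2 := by ring
    _ ≤ 25 * (5 * ∑ q ∈ Finset.range 5, (‖z q‖ ^ 2) ^ 2) := by gcongr
    _ = _ := by simp_rw [← pow_mul]; ring

lemma aux_main (lam δ : ℝ) (hlam : 0 < lam) (hδ : 0 < δ) (N : ℕ) (S : Finset (ℤ × ℤ))
    (a : ℤ × ℤ → ℂ)
    (hS : ∀ k ∈ S, lam - δ < nrm2 (ptR k) ∧ nrm2 (ptR k) < lam + δ)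
    (hN : ∀ j : ℕ, {k : ℤ × ℤ | k ∈ S ∧ k ∈ capPts lam δ j}.ncard ≤ N) :
    ∫ x in unitSq, ‖auxF S a x‖ ^ 4 ≤ 12 ^ 4 * N * (∑ k ∈ S, ‖a k‖ ^ 2) ^ 2 := by
  classical
  have hpi : 0 < Real.pi / 2 := by positivity
  set g : ℤ × ℤ → ℕ := fun k => ⌊ang (ptR k) / (Real.pi / 2)⌋₊ with hg
  have hgm : ∀ k ∈ S, g k ∈ Finset.range 5 := by
    intro k _
    rw [Finset.mem_range, hg]
    refine (Nat.floor_lt (div_nonneg (aux_ang_pos _) hpi.le)).2 ?_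
    rw [div_lt_iff₀ hpi]
    push_cast
    linarith [aux_ang_le (ptR k), Real.pi_pos]
  set T : ℕ → Finset (ℤ × ℤ) := fun q => S.filter (fun k => g k = q) with hTdef
  have hsum : ∀ x, auxF S a x = ∑ q ∈ Finset.range 5, auxF (T q) a x := by
    intro x
    unfold auxF
    rw [hTdef]
    exact (Finset.sum_fiberwise_of_maps_to hgm _).symm
  have hsec : ∀ q, ∀ k ∈ T q, ∀ l ∈ T q, |ang (ptR k) - ang (ptR l)| ≤ Real.pi / 2 := by
    intro q k hk l hl
    have h1 := (Finset.mem_filter.1 hk).2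
    have h2 := (Finset.mem_filter.1 hl).2
    have f1 := Nat.floor_le (div_nonneg (aux_ang_pos (ptR k)) hpi.le)
    have f2 := Nat.floor_le (div_nonneg (aux_ang_pos (ptR l)) hpi.le)
    have f3 := Nat.lt_floor_add_one (ang (ptR k) / (Real.pi / 2))
    have f4 := Nat.lt_floor_add_one (ang (ptR l) / (Real.pi / 2))
    simp only [hg] at h1 h2
    rw [h1] at f1 f3
    rw [h2] at f2 f4
    rw [le_div_iff₀ hpi] at f1 f2
    rw [div_lt_iff₀ hpi] at f3 f4
    rw [abs_le]
    constructor <;> linarith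
  have hpiece : ∀ q, ∫ x in unitSq, ‖auxF (T q) a x‖ ^ 4 ≤
      ((122 * N : ℕ) : ℝ) * (∑ k ∈ T q, ‖a k‖ ^ 2) ^ 2 := fun q =>
    aux_l4 (T q) a (122 * N) (aux_rep lam δ hlam hδ N S (T q) hS hN (Finset.filter_subset _ _) (hsec q))
  have hA : ∑ k ∈ S, ‖a k‖ ^ 2 = ∑ q ∈ Finset.range 5, ∑ k ∈ T q, ‖a k‖ ^ 2 :=
    (Finset.sum_fiberwise_of_maps_to hgm _).symm
  have hIntegr : ∀ q, IntegrableOn (fun x => ‖auxF (T q) a x‖ ^ 4) unitSq := fun q =>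
    aux_integrable _ ((auxF_cont _ _).norm.pow 4)
  calc ∫ x in unitSq, ‖auxF S a x‖ ^ 4
      ≤ ∫ x in unitSq, 125 * ∑ q ∈ Finset.range 5, ‖auxF (T q) a x‖ ^ 4 := by
        apply integral_mono
        · exact aux_integrable _ ((auxF_cont _ _).norm.pow 4)
        · exact (integrable_finsetSum _ (fun q _ => hIntegr q)).const_mul _
        · intro x
          simp only [hsum]
          exact aux_pieces _
    _ = 125 * ∑ q ∈ Finset.range 5, ∫ x in unitSq, ‖auxF (T q) a x‖ ^ 4 := by
        rw [integral_const_mul, integral_finsetSum _ (fun q _ => hIntegr q)]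
    _ ≤ 125 * ∑ q ∈ Finset.range 5, ((122 * N : ℕ) : ℝ) * (∑ k ∈ T q, ‖a k‖ ^ 2) ^ 2 := by
        gcongr with q _
        exact hpiece q
    _ = 125 * (122 * N) * ∑ q ∈ Finset.range 5, (∑ k ∈ T q, ‖a k‖ ^ 2) ^ 2 := by
        rw [← Finset.mul_sum]; push_cast; ring
    _ ≤ 125 * (122 * N) * (∑ k ∈ S, ‖a k‖ ^ 2) ^ 2 := by
        gcongr
        rw [hA]
        exact Finset.sum_sq_le_sq_sum_of_nonneg (fun q _ => by positivity)
    _ ≤ 12 ^ 4 * N * (∑ k ∈ S, ‖a k‖ ^ 2) ^ 2 := by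
        have : (0 : ℝ) ≤ N := Nat.cast_nonneg N
        apply mul_le_mul_of_nonneg_right _ (by positivity)
        linarith

/-- if `f` is a trigonometric polynomial on `𝕋²` with Fourier support `S`
in the annulus `λ - δ < |k| < λ + δ` (with `λδ ≥ 1`) such that every cap contains at most
`N` points of `S`, then `‖f‖_{L⁴} ≤ C N^{1/4} ‖f‖_{L²}`. -/
theorem stmt18 :
    ∃ C : ℝ, 0 < C ∧
      ∀ (lam δ : ℝ) (N : ℕ) (S : Finset (ℤ × ℤ)) (a : ℤ × ℤ → ℂ),
        2 ≤ lam → 0 < δ → 1 ≤ lam * δ →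
        (∀ k ∈ S, lam - δ < nrm2 (ptR k) ∧ nrm2 (ptR k) < lam + δ) →
        (∀ j : ℕ, {k : ℤ × ℤ | k ∈ S ∧ k ∈ capPts lam δ j}.ncard ≤ N) →
        (∫ x in unitSq,
            ‖∑ k ∈ S, a k * e₂ ((k.1 : ℝ) * x.1 + (k.2 : ℝ) * x.2)‖ ^ (4 : ℝ)) ^ ((1 : ℝ) / 4) ≤
          C * (N : ℝ) ^ ((1 : ℝ) / 4) *
            (∫ x in unitSq,
              ‖∑ k ∈ S, a k * e₂ ((k.1 : ℝ) * x.1 + (k.2 : ℝ) * x.2)‖ ^ (2 : ℝ)) ^ ((1 : ℝ) / 2) := by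
  refine ⟨12, by norm_num, ?_⟩
  intro lam δ N S a hlam hδ _ hS hN
  have hm := aux_main lam δ (by linarith) hδ N S a hS hN
  rw [← aux_parseval] at hm
  have e4 : ∀ y : ℝ, y ^ (4 : ℝ) = y ^ 4 := fun y => by
    rw [← Real.rpow_natCast]; norm_num
  have e2 : ∀ y : ℝ, y ^ (2 : ℝ) = y ^ 2 := fun y => by
    rw [← Real.rpow_natCast]; norm_num
  simp_rw [e4, e2]
  change (∫ x in unitSq, ‖auxF S a x‖ ^ 4) ^ ((1 : ℝ) / 4) ≤
    12 * (N : ℝ) ^ ((1 : ℝ) / 4) * (∫ x in unitSq, ‖auxF S a x‖ ^ 2) ^ ((1 : ℝ) / 2)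
  have p4 : 0 ≤ ∫ x in unitSq, ‖auxF S a x‖ ^ 4 := integral_nonneg fun x => by positivity
  have p2 : 0 ≤ ∫ x in unitSq, ‖auxF S a x‖ ^ 2 := integral_nonneg fun x => by positivity
  generalize (∫ x in unitSq, ‖auxF S a x‖ ^ 4) = X at *
  generalize (∫ x in unitSq, ‖auxF S a x‖ ^ 2) = Y at *
  calc X ^ ((1 : ℝ) / 4) ≤ (12 ^ 4 * N * Y ^ 2) ^ ((1 : ℝ) / 4) := by gcongr
    _ = 12 * (N : ℝ) ^ ((1 : ℝ) / 4) * Y ^ ((1 : ℝ) / 2) := by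
      rw [Real.mul_rpow (by positivity) (by positivity), Real.mul_rpow (by positivity) (by positivity)]
      congr 1
      · congr 1
        rw [← Real.rpow_natCast, ← Real.rpow_mul (by norm_num)]
        norm_num
      · rw [← Real.rpow_natCast, ← Real.rpow_mul p2]
        norm_num
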